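/- arXiv:1802.02074 — 8 statements merged into one kernel-verified Lean document; each statement's English description precedes it below -/
import Mathlib

section
/- Let a be an additive and positive parametric sequence, J ≥ 2, θ ∈ (0,∞)^J, p a pmf on ℕ, and let P be the convolution splitting distribution P(y) = p(|y|)·∏_{j=1}^{J} a_{θ_j}(y_j)/a_{|θ|}(|y|) on ℕ^J. Let I be a nonempty proper subset of {1,…,J}. Then for every n ∈ ℕ, the marginal sum satisfies ∑_{y ∈ ℕ^J : ∑_{j∈I} y_j = n} P(y) = ∑_{k ≥ n} (a_{|θ_I|}(n)·a_{|θ_{−I}|}(k−n)/a_{|θ|}(k))·p(k), where |θ_I| = ∑_{j∈I} θ_j and |θ_{−I}| = ∑_{j∉I} θ_j. -/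
lemma conv_aux {ι : Type*} [DecidableEq ι] (a : ℝ → ℕ → ℝ)
    (ha_add : ∀ θ θ' : ℝ, 0 < θ → 0 < θ' → ∀ n : ℕ,
      ∑ y ∈ Finset.range (n + 1), a θ y * a θ' (n - y) = a (θ + θ') n)
    (θ : ι → ℝ) (hθ : ∀ j, 0 < θ j) (s : Finset ι) (hs : s.Nonempty) :
    ∀ n, ∑ y ∈ s.piAntidiag n, ∏ j ∈ s, a (θ j) (y j) = a (∑ j ∈ s, θ j) n := by
  induction hs using Finset.Nonempty.cons_induction with
  | singleton i =>
    intro n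
    rw [show ({i} : Finset ι).piAntidiag n = {Pi.single i n} by
      ext f
      simp only [Finset.mem_piAntidiag, Finset.sum_singleton, Finset.mem_singleton]
      constructor
      · rintro ⟨h1, h2⟩
        funext j
        by_cases hj : j = i
        · subst hj; simp [h1]
        · have := mt (h2 j) hj
          simpa [hj] using this
      · rintro rfl
        refine ⟨by simp, fun j hj => ?_⟩
        by_contra h
        simp [h] at hj]
    simp
  | cons i s hi hs ih =>
    intro n
    rw [Finset.piAntidiag_cons, Finset.sum_disjiUnion, Finset.sum_cons,
      ← ha_add _ _ (hθ i) (Finset.sum_pos (fun j _ => hθ j) hs),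
      Finset.Nat.sum_antidiagonal_eq_sum_range_succ_mk]
    refine Finset.sum_congr rfl fun y hy => ?_
    rw [← ih, Finset.mul_sum, Finset.sum_map]
    refine Finset.sum_congr rfl fun f hf => ?_
    have hf' : f i = 0 := by
      by_contra h
      exact hi ((Finset.mem_piAntidiag.1 hf).2 i h)
    rw [Finset.prod_cons]
    congr 1
    · simp [hf']
    · refine Finset.prod_congr rfl fun j hj => ?_
      have : j ≠ i := fun h => hi (h ▸ hj)
      simp [this]

lemma split_aux {ι : Type*} [Fintype ι] [DecidableEq ι] (a : ℝ → ℕ → ℝ)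
    (ha_add : ∀ θ θ' : ℝ, 0 < θ → 0 < θ' → ∀ n : ℕ,
      ∑ y ∈ Finset.range (n + 1), a θ y * a θ' (n - y) = a (θ + θ') n)
    (θ : ι → ℝ) (hθ : ∀ j, 0 < θ j) (I : Finset ι) (hI : I.Nonempty) (hI' : Iᶜ.Nonempty)
    (n k : ℕ) (hk : n ≤ k) :
    ∑ y ∈ (Finset.univ.piAntidiag k).filter (fun y : ι → ℕ => ∑ j ∈ I, y j = n),
      ∏ j, a (θ j) (y j) = a (∑ j ∈ I, θ j) n * a (∑ j ∈ Iᶜ, θ j) (k - n) := by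
  rw [← conv_aux a ha_add θ hθ I hI, ← conv_aux a ha_add θ hθ Iᶜ hI', Finset.sum_mul_sum,
    ← Finset.sum_product']
  refine Finset.sum_nbij' (fun y => (fun j => if j ∈ I then y j else 0,
    fun j => if j ∈ I then 0 else y j)) (fun q => q.1 + q.2) ?_ ?_ ?_ ?_ ?_
  · intro y hy
    simp only [Finset.mem_filter, Finset.mem_piAntidiag] at hy
    have h := Finset.sum_add_sum_compl I y
    have h2 : ∑ j ∈ Iᶜ, (if j ∈ I then 0 else y j) = ∑ j ∈ Iᶜ, y j :=
      Finset.sum_congr rfl fun j hj => by simp [Finset.mem_compl.1 hj]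
    have h1 : ∑ j ∈ I, (if j ∈ I then y j else 0) = ∑ j ∈ I, y j :=
      Finset.sum_congr rfl fun j hj => by simp [hj]
    have h3 : ∑ j, y j = k := hy.1.1
    have h4 : ∑ j ∈ I, y j = n := hy.2
    simp only [Finset.mem_product, Finset.mem_piAntidiag]
    refine ⟨⟨h1.trans hy.2, fun j => by simp +contextual⟩, h2.trans (by omega), fun j => by simp +contextual⟩
  · rintro ⟨f, g⟩ h
    simp only [Finset.mem_product, Finset.mem_piAntidiag] at h
    obtain ⟨⟨hf, hf'⟩, hg, hg'⟩ := h
    have hf2 : ∑ j ∈ I, f j = n := hf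
    have hg2 : ∑ j ∈ Iᶜ, g j = k - n := hg
    have e1 : ∑ j ∈ I, g j = 0 := Finset.sum_eq_zero fun j hj => by
      by_contra h; exact Finset.mem_compl.1 (hg' j h) hj
    have e2 : ∑ j ∈ Iᶜ, f j = 0 := Finset.sum_eq_zero fun j hj => by
      by_contra h; exact Finset.mem_compl.1 hj (hf' j h)
    have e3 := Finset.sum_add_sum_compl I f
    have e4 := Finset.sum_add_sum_compl I g
    simp only [Finset.mem_filter, Finset.mem_piAntidiag, Pi.add_apply, Finset.sum_add_distrib]
    refine ⟨⟨?_, by simp⟩, by omega⟩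
    have h5 : ∑ j, f j + ∑ j, g j = k := by omega
    exact h5
  · intro y hy
    funext j
    by_cases hj : j ∈ I <;> simp [hj]
  · rintro ⟨f, g⟩ h
    simp only [Finset.mem_product, Finset.mem_piAntidiag] at h
    obtain ⟨⟨hf, hf'⟩, hg, hg'⟩ := h
    ext j
    · by_cases hj : j ∈ I
      · have : g j = 0 := by by_contra h; exact Finset.mem_compl.1 (hg' j h) hj
        simp [hj, this]
      · have : f j = 0 := by by_contra h; exact hj (hf' j h)
        simp [hj, this]
    · by_cases hj : j ∈ I
      · have : g j = 0 := by by_contra h; exact Finset.mem_compl.1 (hg' j h) hj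
        simp [hj, this]
      · have : f j = 0 := by by_contra h; exact hj (hf' j h)
        simp [hj, this]
  · intro y hy
    rw [← Finset.prod_mul_prod_compl I]
    congr 1
    · exact Finset.prod_congr rfl fun j hj => by simp [hj]
    · exact Finset.prod_congr rfl fun j hj => by simp [Finset.mem_compl.1 hj]

lemma fiber_aux {J : ℕ} (P : (Fin J → ℕ) → ℝ) (hP0 : ∀ y, 0 ≤ P y) (I : Finset (Fin J)) (n : ℕ)
    (R : ℕ → ℝ) (hR : ∀ k, n ≤ k → R k =
      ∑ y ∈ (Finset.univ.piAntidiag k).filter (fun y : Fin J → ℕ => ∑ j ∈ I, y j = n), P y) :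
    ∑' y : {y : Fin J → ℕ // ∑ j ∈ I, y j = n}, P y.val = ∑' k : {k : ℕ // n ≤ k}, R k.val := by
  have hR0 : ∀ k, n ≤ k → 0 ≤ R k := fun k hk => by
    rw [hR k hk]; exact Finset.sum_nonneg fun y _ => hP0 y
  have key : ∑' y : {y : Fin J → ℕ // ∑ j ∈ I, y j = n}, ENNReal.ofReal (P y.val)
      = ∑' k : {k : ℕ // n ≤ k}, ENNReal.ofReal (R k.val) := by
    let g : {y : Fin J → ℕ // ∑ j ∈ I, y j = n} → {k : ℕ // n ≤ k} := fun y =>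
      ⟨∑ j, y.1 j, by
        exact y.2.symm.le.trans (Finset.sum_le_sum_of_subset (Finset.subset_univ _))⟩
    rw [← (Equiv.sigmaFiberEquiv g).tsum_eq, ENNReal.tsum_sigma']
    refine tsum_congr fun k => ?_
    rw [hR k k.2, ENNReal.ofReal_sum_of_nonneg fun y _ => hP0 y, ← Finset.tsum_subtype]
    let e : {y // g y = k} ≃ {y // y ∈ (Finset.univ.piAntidiag k.1).filter
        (fun y : Fin J → ℕ => ∑ j ∈ I, y j = n)} :=
      { toFun := fun y => ⟨y.1.1, by
          simp only [Finset.mem_filter, Finset.mem_piAntidiag]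
          exact ⟨⟨congrArg Subtype.val y.2, by simp⟩, y.1.2⟩⟩
        invFun := fun y => ⟨⟨y.1, (Finset.mem_filter.1 y.2).2⟩,
          Subtype.ext (Finset.mem_piAntidiag.1 (Finset.mem_filter.1 y.2).1).1⟩
        left_inv := fun y => rfl
        right_inv := fun y => rfl }
    exact e.tsum_eq (fun y => ENNReal.ofReal (P y.1))
  have := congrArg ENNReal.toReal key
  rw [ENNReal.tsum_toReal_eq (fun _ => ENNReal.ofReal_ne_top),
    ENNReal.tsum_toReal_eq (fun _ => ENNReal.ofReal_ne_top)] at this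
  convert this using 2
  · funext y; rw [ENNReal.toReal_ofReal (hP0 _)]
  · funext k; rw [ENNReal.toReal_ofReal (hR0 _ k.2)]


/-- marginal sum of a convolution splitting distribution.
For an additive, positive parametric sequence `a`, `J ≥ 2`, `θ ∈ (0,∞)^J`, a pmf `p` on `ℕ`,
and the convolution splitting distribution
`P y = p |y| * (∏ j, a (θ j) (y j)) / a |θ| |y|` on `ℕ^J`, and `I` a nonempty proper subset of
`{1,…,J}`, for every `n` the marginal sum satisfies
`∑_{y : ∑_{j∈I} y j = n} P y = ∑_{k ≥ n} (a |θ_I| n * a |θ_{-I}| (k-n) / a |θ| k) * p k`. -/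
theorem marginal_sum_of_convolution_splitting
    (a : ℝ → ℕ → ℝ)
    (ha_pos : ∀ θ : ℝ, 0 < θ → ∀ y : ℕ, 0 < a θ y)
    (ha_add : ∀ θ θ' : ℝ, 0 < θ → 0 < θ' → ∀ n : ℕ,
      ∑ y ∈ Finset.range (n + 1), a θ y * a θ' (n - y) = a (θ + θ') n)
    (J : ℕ) (hJ : 2 ≤ J) (θ : Fin J → ℝ) (hθ : ∀ j, 0 < θ j)
    (p : ℕ → ℝ) (hp0 : ∀ n, 0 ≤ p n) (hp1 : ∑' n : ℕ, p n = 1)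
    (P : (Fin J → ℕ) → ℝ)
    (hP : ∀ y : Fin J → ℕ,
      P y = p (∑ j, y j) * (∏ j, a (θ j) (y j)) / a (∑ j, θ j) (∑ j, y j))
    (I : Finset (Fin J)) (hI : I.Nonempty) (hI' : I ≠ Finset.univ) :
    ∀ n : ℕ,
      ∑' y : {y : Fin J → ℕ // ∑ j ∈ I, y j = n}, P y.val
        = ∑' k : {k : ℕ // n ≤ k},
            a (∑ j ∈ I, θ j) n * a (∑ j ∈ Iᶜ, θ j) (k.val - n) / a (∑ j, θ j) k.val
              * p k.val := by
  intro n
  have hIc : Iᶜ.Nonempty := by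
    rw [Finset.nonempty_iff_ne_empty]
    intro h
    exact hI' (Finset.compl_eq_empty_iff I |>.1 h)
  have hθs : 0 < ∑ j, θ j :=
    Finset.sum_pos (fun j _ => hθ j) (hI.mono (Finset.subset_univ _))
  refine fiber_aux P (fun y => ?_) I n (fun k =>
    a (∑ j ∈ I, θ j) n * a (∑ j ∈ Iᶜ, θ j) (k - n) / a (∑ j, θ j) k * p k) (fun k hk => ?_)
  · rw [hP]
    exact div_nonneg (mul_nonneg (hp0 _) (Finset.prod_nonneg fun j _ => (ha_pos _ (hθ j) _).le))
      (ha_pos _ hθs _).le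
  · show a (∑ j ∈ I, θ j) n * a (∑ j ∈ Iᶜ, θ j) (k - n) / a (∑ j, θ j) k * p k = _
    rw [← split_aux a ha_add θ hθ I hI hIc n k hk, div_mul_eq_mul_div, Finset.sum_mul,
      Finset.sum_div]
    refine Finset.sum_congr rfl fun y hy => ?_
    rw [hP, (Finset.mem_piAntidiag.1 (Finset.mem_filter.1 hy).1).1, mul_comm (p k)]
end

section
/- Let a be an additive and positive parametric sequence, J ≥ 2, θ ∈ (0,∞)^J, p a pmf on ℕ, and let P be the convolution splitting distribution P(y) = p(|y|)·∏_{j=1}^{J} a_{θ_j}(y_j)/a_{|θ|}(|y|) on ℕ^J. Let I be a nonempty proper subset of {1,…,J}. Then for every z : I → ℕ with ∑_{j∈I} z_j = n such that ∑_{y : ∑_{j∈I} y_j = n} P(y) > 0, the conditional distribution of the subvector given its sum is the singular convolution distribution: (∑_{y ∈ ℕ^J : y_j = z_j for all j∈I} P(y)) / (∑_{y ∈ ℕ^J : ∑_{j∈I} y_j = n} P(y)) = ∏_{j∈I} a_{θ_j}(z_j)/a_{|θ_I|}(n), where |θ_I| = ∑_{j∈I} θ_j. -/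
theorem conv_piAntidiag
    (a : ℝ → ℕ → ℝ)
    (ha_add : ∀ θ θ' : ℝ, 0 < θ → 0 < θ' → ∀ n : ℕ,
      ∑ y ∈ Finset.range (n + 1), a θ y * a θ' (n - y) = a (θ + θ') n)
    {ι : Type} [DecidableEq ι] (θ : ι → ℝ) (hθ : ∀ j, 0 < θ j)
    (I : Finset ι) (hI : I.Nonempty) :
    ∀ n : ℕ, ∑ u ∈ Finset.piAntidiag I n, ∏ j ∈ I, a (θ j) (u j) = a (∑ j ∈ I, θ j) n := by
  induction hI using Finset.Nonempty.cons_induction with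
  | singleton i =>
    intro n
    have : Finset.piAntidiag {i} n = {Pi.single i n} := by
      ext u
      simp only [Finset.mem_piAntidiag, Finset.sum_singleton, Finset.mem_singleton]
      constructor
      · rintro ⟨h, h'⟩
        funext j
        by_cases hj : j = i
        · subst hj; simp [h]
        · have : u j = 0 := by
            by_contra h0
            exact hj (h' j h0)
          simp [hj, this]
      · rintro rfl
        refine ⟨by simp, fun j hj => ?_⟩
        by_contra h
        simp [h] at hj
    simp [this]
  | cons i s hi hs ih =>
    intro n
    rw [Finset.piAntidiag_cons, Finset.sum_disjiUnion, Finset.sum_cons,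
      ← ha_add _ _ (hθ i) (Finset.sum_pos (fun j _ => hθ j) hs),
      Finset.Nat.sum_antidiagonal_eq_sum_range_succ_mk]
    refine Finset.sum_congr rfl fun k _ => ?_
    rw [Finset.sum_map, ← ih, Finset.mul_sum]
    refine Finset.sum_congr rfl fun u hu => ?_
    have hui : u i = 0 := by
      by_contra h
      exact hi ((Finset.mem_piAntidiag.1 hu).2 i h)
    rw [Finset.prod_cons]
    congr 1
    · simp [hui]
    · refine Finset.prod_congr rfl fun j hj => ?_
      have : j ≠ i := fun h => hi (h ▸ hj)
      simp [this]


/-- the conditional distribution of a subvector of a convolution splitting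
distribution given its sum is the singular convolution distribution.
For an additive, positive parametric sequence `a`, `J ≥ 2`, `θ ∈ (0,∞)^J`, a pmf `p`, the
convolution splitting distribution `P`, a nonempty proper subset `I` and `z : I → ℕ` with
`∑_{j∈I} z j = n` such that the marginal-sum probability is positive,
`P(Y_I = z | ∑_{j∈I} Y_j = n) = ∏_{j∈I} a (θ j) (z j) / a |θ_I| n`. -/
theorem conditional_subvector_given_sum_of_convolution_splitting
    (a : ℝ → ℕ → ℝ)
    (ha_pos : ∀ θ : ℝ, 0 < θ → ∀ y : ℕ, 0 < a θ y)
    (ha_add : ∀ θ θ' : ℝ, 0 < θ → 0 < θ' → ∀ n : ℕ,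
      ∑ y ∈ Finset.range (n + 1), a θ y * a θ' (n - y) = a (θ + θ') n)
    (J : ℕ) (hJ : 2 ≤ J) (θ : Fin J → ℝ) (hθ : ∀ j, 0 < θ j)
    (p : ℕ → ℝ) (hp0 : ∀ n, 0 ≤ p n) (hp1 : ∑' n : ℕ, p n = 1)
    (P : (Fin J → ℕ) → ℝ)
    (hP : ∀ y : Fin J → ℕ,
      P y = p (∑ j, y j) * (∏ j, a (θ j) (y j)) / a (∑ j, θ j) (∑ j, y j))
    (I : Finset (Fin J)) (hI : I.Nonempty) (hI' : I ≠ Finset.univ)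
    (z : Fin J → ℕ) (n : ℕ) (hz : ∑ j ∈ I, z j = n)
    (hpos : 0 < ∑' y : {y : Fin J → ℕ // ∑ j ∈ I, y j = n}, P y.val) :
    (∑' y : {y : Fin J → ℕ // ∀ j ∈ I, y j = z j}, P y.val)
        / (∑' y : {y : Fin J → ℕ // ∑ j ∈ I, y j = n}, P y.val)
      = (∏ j ∈ I, a (θ j) (z j)) / a (∑ j ∈ I, θ j) n := by
  classical
  set A : (Fin J → ℕ) → ℝ := fun u => ∏ j ∈ I, a (θ j) (u j) with hA
  set g : (Fin J → ℕ) → ℝ := fun v => p (n + ∑ j ∈ Iᶜ, v j) * (∏ j ∈ Iᶜ, a (θ j) (v j))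
    / a (∑ j, θ j) (n + ∑ j ∈ Iᶜ, v j) with hg
  have hPy : ∀ y : Fin J → ℕ, ∑ j ∈ I, y j = n → P y = A y * g y := by
    intro y hy
    rw [hP, ← Finset.sum_add_sum_compl I y, ← Finset.prod_mul_prod_compl I, hy]
    simp only [hA, hg]
    ring
  have hAc : ∀ u v : Fin J → ℕ, (∀ j ∈ I, u j = v j) → A u = A v := by
    intro u v h
    exact Finset.prod_congr rfl fun j hj => by rw [h j hj]
  have hgc : ∀ u v : Fin J → ℕ, (∀ j ∉ I, u j = v j) → g u = g v := by
    intro u v h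
    have h1 : ∑ j ∈ Iᶜ, u j = ∑ j ∈ Iᶜ, v j :=
      Finset.sum_congr rfl fun j hj => h j (by simpa using hj)
    have h2 : ∏ j ∈ Iᶜ, a (θ j) (u j) = ∏ j ∈ Iᶜ, a (θ j) (v j) :=
      Finset.prod_congr rfl fun j hj => by rw [h j (by simpa using hj)]
    simp only [hg, h1, h2]
  let V := {v : Fin J → ℕ // ∀ j ∈ I, v j = 0}
  let eN : V ≃ {y : Fin J → ℕ // ∀ j ∈ I, y j = z j} :=
    { toFun := fun v => ⟨fun j => if j ∈ I then z j else v.1 j, fun j hj => by simp [hj]⟩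
      invFun := fun y => ⟨fun j => if j ∈ I then 0 else y.1 j, fun j hj => by simp [hj]⟩
      left_inv := by
        rintro ⟨v, hv⟩
        ext j
        by_cases hj : j ∈ I <;> simp [hj, hv]
      right_inv := by
        rintro ⟨v, hv⟩
        ext j
        by_cases hj : j ∈ I <;> simp [hj, hv] }
  let eD : (↥(Finset.piAntidiag I n)) × V ≃ {y : Fin J → ℕ // ∑ j ∈ I, y j = n} :=
    { toFun := fun w => ⟨fun j => if j ∈ I then w.1.1 j else w.2.1 j, by
        refine Eq.trans ?_ (Finset.mem_piAntidiag.1 w.1.2).1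
        exact Finset.sum_congr rfl fun j hj => by simp [hj]⟩
      invFun := fun y => (⟨fun j => if j ∈ I then y.1 j else 0, by
          rw [Finset.mem_piAntidiag]
          refine ⟨?_, fun j hj => by by_contra h; simp [h] at hj⟩
          refine Eq.trans ?_ y.2
          exact Finset.sum_congr rfl fun j hj => by simp [hj]⟩,
        ⟨fun j => if j ∈ I then 0 else y.1 j, fun j hj => by simp [hj]⟩)
      left_inv := by
        rintro ⟨⟨u, hu⟩, ⟨v, hv⟩⟩
        have hu' := (Finset.mem_piAntidiag.1 hu).2
        refine Prod.ext (Subtype.ext (funext fun j => ?_)) (Subtype.ext (funext fun j => ?_))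
        · by_cases hj : j ∈ I
          · simp [hj]
          · have : u j = 0 := by
              by_contra h
              exact hj (hu' j h)
            simp [hj, this]
        · by_cases hj : j ∈ I <;> simp [hj, hv]
      right_inv := by
        rintro ⟨v, hv⟩
        ext j
        by_cases hj : j ∈ I <;> simp [hj] }
  have hN : ∑' y : {y : Fin J → ℕ // ∀ j ∈ I, y j = z j}, P y.val
      = A z * ∑' v : V, g v.1 := by
    rw [← eN.tsum_eq, ← tsum_mul_left]
    refine tsum_congr fun v => ?_
    have h := (eN v).2
    rw [hPy _ (by rw [← hz]; exact Finset.sum_congr rfl h), hAc _ z h,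
      hgc _ v.1 (fun j hj => by simp [eN, hj])]
  have hDt : ∀ w, P (eD w).1 = A w.1.1 * g w.2.1 := by
    intro w
    rw [hPy _ (eD w).2, hAc _ w.1.1 (fun j hj => by simp [eD, hj]),
      hgc _ w.2.1 (fun j hj => by simp [eD, hj])]
  have hS : Summable fun y : {y : Fin J → ℕ // ∑ j ∈ I, y j = n} => P y.val := by
    by_contra h
    rw [tsum_eq_zero_of_not_summable h] at hpos
    exact lt_irrefl _ hpos
  have hS2 : Summable fun w : (↥(Finset.piAntidiag I n)) × V => A w.1.1 * g w.2.1 := by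
    have := eD.summable_iff.2 hS
    exact this.congr fun w => hDt w
  have hD : ∑' y : {y : Fin J → ℕ // ∑ j ∈ I, y j = n}, P y.val
      = a (∑ j ∈ I, θ j) n * ∑' v : V, g v.1 := by
    rw [← eD.tsum_eq, tsum_congr hDt, hS2.tsum_prod]
    simp only [tsum_mul_left]
    rw [tsum_fintype, ← Finset.sum_mul, ← conv_piAntidiag a ha_add θ hθ I hI n]
    congr 1
    exact Finset.sum_coe_sort _ A
  rw [hD] at hpos
  rw [hN, hD]
  exact mul_div_mul_right _ _ (right_ne_zero_of_mul hpos.ne')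
end

section
/- Let a be an additive and positive parametric sequence, J ≥ 2, θ ∈ (0,∞)^J, p a pmf on ℕ, and let P be the convolution splitting distribution P(y) = p(|y|)·∏_{j=1}^{J} a_{θ_j}(y_j)/a_{|θ|}(|y|) on ℕ^J. Let I be a nonempty proper subset of {1,…,J}, fix w : ({1,…,J}∖I) → ℕ with δ = ∑_{j∉I} w_j, and suppose the normalizer Z = ∑_{m≥0} a_{|θ_I|}(m)·p(m+δ)/a_{|θ|}(m+δ) is positive. Then for every z : I → ℕ, the conditional distribution of the subvector indexed by I given the complementary subvector equals w satisfies (∑_{y : y_j = z_j (j∈I), y_j = w_j (j∉I)} P(y)) / (∑_{y : y_j = w_j (j∉I)} P(y)) = (∏_{j∈I} a_{θ_j}(z_j))·(p(|z|+δ)/a_{|θ|}(|z|+δ)) / Z, where |z| = ∑_{j∈I} z_j and |θ_I| = ∑_{j∈I} θ_j. -/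
open Finset in
lemma aux_conv (a : ℝ → ℕ → ℝ)
    (ha_add : ∀ θ θ' : ℝ, 0 < θ → 0 < θ' → ∀ n : ℕ,
      ∑ y ∈ Finset.range (n + 1), a θ y * a θ' (n - y) = a (θ + θ') n)
    {J : ℕ} (θ : Fin J → ℝ) (hθ : ∀ j, 0 < θ j)
    (I : Finset (Fin J)) (hI : I.Nonempty) : ∀ n : ℕ,
    ∑ f ∈ Finset.piAntidiag I n, ∏ j ∈ I, a (θ j) (f j) = a (∑ j ∈ I, θ j) n := by
  induction hI using Finset.Nonempty.cons_induction with
  | singleton i =>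
    intro n
    have : Finset.piAntidiag {i} n = {fun j => if j = i then n else 0} := by
      ext f
      simp only [Finset.mem_piAntidiag, Finset.sum_singleton, Finset.mem_singleton]
      constructor
      · rintro ⟨h1, h2⟩
        funext j
        by_cases hj : j = i
        · simp [hj, h1]
        · by_contra h
          simp [hj] at h
          exact hj (h2 j h)
      · rintro rfl
        simp
    simp [this]
  | cons i s his hs ih =>
    intro n
    rw [Finset.piAntidiag_cons, Finset.sum_disjiUnion, Finset.sum_cons,
      ← ha_add _ _ (hθ i) (Finset.sum_pos (fun j _ => hθ j) hs),
      Finset.Nat.sum_antidiagonal_eq_sum_range_succ_mk]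
    refine Finset.sum_congr rfl fun k _ => ?_
    rw [Finset.sum_map, ← ih, Finset.mul_sum]
    refine Finset.sum_congr rfl fun f hf => ?_
    have hfi : f i = 0 := by
      by_contra h
      exact his ((Finset.mem_piAntidiag.1 hf).2 i h)
    rw [Finset.prod_cons]
    congr 1
    · simp [hfi]
    · refine Finset.prod_congr rfl fun j hj => ?_
      have : j ≠ i := fun h => his (h ▸ hj)
      simp [this]

/-- Vectors agreeing with `w` off `I`, sorted by their mass on `I`. -/
noncomputable def auxEquiv {J : ℕ} (I : Finset (Fin J)) (w : Fin J → ℕ) :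
    (Σ m : ℕ, {f : Fin J → ℕ // f ∈ Finset.piAntidiag I m}) ≃
      {y : Fin J → ℕ // ∀ j ∉ I, y j = w j} where
  toFun x := ⟨fun j => if j ∈ I then x.2.1 j else w j, fun j hj => by simp [hj]⟩
  invFun y := ⟨∑ j ∈ I, y.1 j, ⟨fun j => if j ∈ I then y.1 j else 0, by
    rw [Finset.mem_piAntidiag]
    refine ⟨Finset.sum_congr rfl fun j hj => by simp [hj], fun j hj => ?_⟩
    by_contra h
    simp [h] at hj⟩⟩
  left_inv := by
    rintro ⟨m, f, hf⟩
    have hf' := Finset.mem_piAntidiag.1 hf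
    obtain ⟨rfl, h2⟩ := hf'
    have e1 : ∑ j ∈ I, (if j ∈ I then f j else w j) = ∑ j ∈ I, f j :=
      Finset.sum_congr rfl fun j hj => by simp [hj]
    have e2 : (fun j => if j ∈ I then (if j ∈ I then f j else w j) else 0) = f := by
      funext j
      by_cases hj : j ∈ I
      · simp [hj]
      · have : f j = 0 := by
          by_contra h
          exact hj (h2 j h)
        simp [hj, this]
    refine Sigma.subtype_ext e1 e2
  right_inv := by
    rintro ⟨y, hy⟩
    ext j
    by_cases hj : j ∈ I
    · simp [hj]
    · simp [hj, hy j hj]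


/-- the conditional distribution of the subvector indexed by `I` given the
complementary subvector, for a convolution splitting distribution. With `δ = ∑_{j∉I} w j`, and
normalizer `Z = ∑_{m≥0} a |θ_I| m * p (m+δ) / a |θ| (m+δ) > 0`, for every `z`,
`P(Y_I = z | Y_{-I} = w) = (∏_{j∈I} a (θ j) (z j)) * (p (|z|+δ) / a |θ| (|z|+δ)) / Z`. -/
theorem conditional_subvector_given_complement_of_convolution_splitting
    (a : ℝ → ℕ → ℝ)
    (ha_pos : ∀ θ : ℝ, 0 < θ → ∀ y : ℕ, 0 < a θ y)
    (ha_add : ∀ θ θ' : ℝ, 0 < θ → 0 < θ' → ∀ n : ℕ,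
      ∑ y ∈ Finset.range (n + 1), a θ y * a θ' (n - y) = a (θ + θ') n)
    (J : ℕ) (hJ : 2 ≤ J) (θ : Fin J → ℝ) (hθ : ∀ j, 0 < θ j)
    (p : ℕ → ℝ) (hp0 : ∀ n, 0 ≤ p n) (hp1 : ∑' n : ℕ, p n = 1)
    (P : (Fin J → ℕ) → ℝ)
    (hP : ∀ y : Fin J → ℕ,
      P y = p (∑ j, y j) * (∏ j, a (θ j) (y j)) / a (∑ j, θ j) (∑ j, y j))
    (I : Finset (Fin J)) (hI : I.Nonempty) (hI' : I ≠ Finset.univ)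
    (w : Fin J → ℕ) (δ : ℕ) (hδ : δ = ∑ j ∈ Iᶜ, w j)
    (Z : ℝ)
    (hZdef : Z = ∑' m : ℕ, a (∑ j ∈ I, θ j) m * p (m + δ) / a (∑ j, θ j) (m + δ))
    (hZ : 0 < Z) :
    ∀ z : Fin J → ℕ,
      (∑' y : {y : Fin J → ℕ // (∀ j ∈ I, y j = z j) ∧ ∀ j ∉ I, y j = w j}, P y.val)
          / (∑' y : {y : Fin J → ℕ // ∀ j ∉ I, y j = w j}, P y.val)
        = (∏ j ∈ I, a (θ j) (z j))
            * (p ((∑ j ∈ I, z j) + δ) / a (∑ j, θ j) ((∑ j ∈ I, z j) + δ)) / Z := by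
  intro z
  have hT : 0 < ∑ j, θ j := by
    obtain ⟨i, _⟩ := hI
    exact Finset.sum_pos (fun j _ => hθ j) ⟨i, Finset.mem_univ i⟩
  set C : ℝ := ∏ j ∈ Iᶜ, a (θ j) (w j) with hC
  have hCpos : 0 < C := Finset.prod_pos fun j _ => ha_pos _ (hθ j) _
  have key : ∀ y : Fin J → ℕ, (∀ j ∉ I, y j = w j) →
      P y = C * ((∏ j ∈ I, a (θ j) (y j)) *
        (p ((∑ j ∈ I, y j) + δ) / a (∑ j, θ j) ((∑ j ∈ I, y j) + δ))) := by
    intro y hy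
    have h1 : ∑ j, y j = (∑ j ∈ I, y j) + δ := by
      rw [← Finset.sum_add_sum_compl I, hδ]
      congr 1
      exact Finset.sum_congr rfl fun j hj => hy j (Finset.mem_compl.1 hj)
    have h2 : ∏ j, a (θ j) (y j) = (∏ j ∈ I, a (θ j) (y j)) * C := by
      rw [← Finset.prod_mul_prod_compl I, hC]
      congr 1
      exact Finset.prod_congr rfl fun j hj => by rw [hy j (Finset.mem_compl.1 hj)]
    rw [hP, h1, h2]
    ring
  have hnum : (∑' y : {y : Fin J → ℕ // (∀ j ∈ I, y j = z j) ∧ ∀ j ∉ I, y j = w j}, P y.val)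
      = C * ((∏ j ∈ I, a (θ j) (z j)) *
        (p ((∑ j ∈ I, z j) + δ) / a (∑ j, θ j) ((∑ j ∈ I, z j) + δ))) := by
    let y0 : {y : Fin J → ℕ // (∀ j ∈ I, y j = z j) ∧ ∀ j ∉ I, y j = w j} :=
      ⟨fun j => if j ∈ I then z j else w j, fun j hj => by simp [hj], fun j hj => by simp [hj]⟩
    rw [tsum_eq_single y0]
    · rw [key _ y0.2.2, Finset.sum_congr rfl y0.2.1,
        Finset.prod_congr rfl fun j hj => by rw [y0.2.1 j hj]]
    · intro y hy
      refine absurd (Subtype.ext (funext fun j => ?_)) hy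
      by_cases hj : j ∈ I
      · rw [y.2.1 j hj, y0.2.1 j hj]
      · rw [y.2.2 j hj, y0.2.2 j hj]
  have hsumm : Summable fun m : ℕ =>
      a (∑ j ∈ I, θ j) m * p (m + δ) / a (∑ j, θ j) (m + δ) := by
    by_contra h
    rw [tsum_eq_zero_of_not_summable h] at hZdef
    exact hZ.ne' hZdef
  have hfib : ∀ m : ℕ, ∑' f : {f : Fin J → ℕ // f ∈ Finset.piAntidiag I m},
      P (auxEquiv I w ⟨m, f⟩).1 =
      C * (a (∑ j ∈ I, θ j) m * p (m + δ) / a (∑ j, θ j) (m + δ)) := by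
    intro m
    have h1 : ∀ f : {f : Fin J → ℕ // f ∈ Finset.piAntidiag I m},
        P (auxEquiv I w ⟨m, f⟩).1 =
        (fun f : Fin J → ℕ => (∏ j ∈ I, a (θ j) (f j)) *
          (C * (p (m + δ) / a (∑ j, θ j) (m + δ)))) f.1 := by
      intro f
      have e : ∀ j ∈ I, (auxEquiv I w ⟨m, f⟩).1 j = f.1 j := fun j hj => by
        simp [auxEquiv, hj]
      rw [key _ (auxEquiv I w ⟨m, f⟩).2, Finset.sum_congr rfl e,
        Finset.prod_congr rfl fun j hj => by rw [e j hj], (Finset.mem_piAntidiag.1 f.2).1]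
      ring
    refine (tsum_congr h1).trans ((Finset.tsum_subtype (Finset.piAntidiag I m)
      (fun f : Fin J → ℕ => (∏ j ∈ I, a (θ j) (f j)) *
          (C * (p (m + δ) / a (∑ j, θ j) (m + δ))))).trans ?_)
    rw [← Finset.sum_mul,
      aux_conv a ha_add θ hθ I hI]
    ring
  have hden : (∑' y : {y : Fin J → ℕ // ∀ j ∉ I, y j = w j}, P y.val) = C * Z := by
    rw [← (auxEquiv I w).tsum_eq]
    have hs : Summable fun x : (Σ m : ℕ, {f : Fin J → ℕ // f ∈ Finset.piAntidiag I m}) =>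
        P (auxEquiv I w x).1 := by
      rw [summable_sigma_of_nonneg]
      · refine ⟨fun m => (hasSum_fintype _).summable, ?_⟩
        simp only [hfib]
        exact hsumm.mul_left C
      · intro x
        rw [hP]
        exact div_nonneg (mul_nonneg (hp0 _)
          (Finset.prod_nonneg fun j _ => (ha_pos _ (hθ j) _).le)) (ha_pos _ hT _).le
    rw [hs.tsum_sigma]
    simp only [hfib]
    rw [tsum_mul_left, hZdef]
  rw [hnum, hden, mul_div_mul_left _ _ hCpos.ne']
end

section
/- (Dirichlet multinomial splitting beta binomial with a = |α| equals non-singular Dirichlet multinomial.) Let J ≥ 1, n ∈ ℕ, α ∈ (0,∞)^J with |α| = α_1+⋯+α_J, and b > 0. Then for every y ∈ ℕ^J with |y| = y_1+⋯+y_J ≤ n: [(n choose |y|)·B(|α|+|y|, b+n−|y|)/B(|α|, b)]·[(|y|!/(|α|)_{|y|})·∏_{j=1}^{J} (α_j)_{y_j}/y_j!] = [(b)_{n−|y|}/(n−|y|)!]·[∏_{j=1}^{J} (α_j)_{y_j}/y_j!]·[n!/(|α|+b)_n], where B(u,v) = Γ(u)Γ(v)/Γ(u+v) is the Beta function and (x)_k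 = x(x+1)⋯(x+k−1) is the Pochhammer symbol. -/
/-- The Pochhammer symbol `(x)ₖ = x(x+1)⋯(x+k−1)`. -/
noncomputable def poch (x : ℝ) (k : ℕ) : ℝ := ∏ i ∈ Finset.range k, (x + i)

/-- The Beta function `B(u,v) = Γ(u)Γ(v)/Γ(u+v)`. -/
noncomputable def betaFn (u v : ℝ) : ℝ := Real.Gamma u * Real.Gamma v / Real.Gamma (u + v)

theorem aux_poch_pos (x : ℝ) (hx : 0 < x) (k : ℕ) : 0 < poch x k := by
  unfold poch
  exact Finset.prod_pos fun i _ => by positivity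

theorem aux_gamma_add (x : ℝ) (hx : 0 < x) (k : ℕ) :
    Real.Gamma (x + k) = poch x k * Real.Gamma x := by
  induction k with
  | zero => simp [poch]
  | succ k ih =>
    have h : x + (k : ℝ) ≠ 0 := by positivity
    have e : x + ((k + 1 : ℕ) : ℝ) = (x + k) + 1 := by push_cast; ring
    rw [e, Real.Gamma_add_one h, ih]
    simp only [poch, Finset.prod_range_succ]
    ring

theorem aux_main (a b : ℝ) (ha : 0 < a) (hb : 0 < b) (s m : ℕ) (P : ℝ) :
    (((s + m).choose s : ℝ) * betaFn (a + (s : ℝ)) (b + (m : ℝ)) / betaFn a b)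
        * ((Nat.factorial s : ℝ) / poch a s) * P
      = (poch b m / (Nat.factorial m : ℝ)) * P
          * ((Nat.factorial (s + m) : ℝ) / poch (a + b) (s + m)) := by
  have e : a + (s : ℝ) + (b + (m : ℝ)) = (a + b) + ((s + m : ℕ) : ℝ) := by
    push_cast; ring
  have hc : ((s + m).choose s : ℝ) * (Nat.factorial s : ℝ) * (Nat.factorial m : ℝ)
      = (Nat.factorial (s + m) : ℝ) := by
    rw [Nat.choose_symm_add]
    exact_mod_cast Nat.add_choose_mul_factorial_mul_factorial s m
  unfold betaFn
  rw [e, aux_gamma_add a ha, aux_gamma_add b hb, aux_gamma_add (a + b) (by positivity), ← hc]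
  have h1 := (Real.Gamma_pos_of_pos ha).ne'
  have h2 := (Real.Gamma_pos_of_pos hb).ne'
  have h3 := (Real.Gamma_pos_of_pos (add_pos ha hb)).ne'
  have h4 := (aux_poch_pos a ha s).ne'
  have h6 := (aux_poch_pos (a + b) (add_pos ha hb) (s + m)).ne'
  have h7 : (Nat.factorial m : ℝ) ≠ 0 := by positivity
  generalize poch (a + b) (s + m) = X at *
  generalize Real.Gamma (a + b) = Y at *
  field_simp

/-- the Dirichlet multinomial splitting beta binomial distribution with `a = |α|`
equals the non-singular Dirichlet multinomial distribution: for `|y| ≤ n`,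
`[C(n,|y|) B(|α|+|y|, b+n−|y|)/B(|α|,b)] * [(|y|!/(|α|)_{|y|}) ∏ⱼ (αⱼ)_{yⱼ}/yⱼ!]
  = [(b)_{n−|y|}/(n−|y|)!] * [∏ⱼ (αⱼ)_{yⱼ}/yⱼ!] * [n!/(|α|+b)ₙ]`. -/
theorem dirichlet_multinomial_splitting_beta_binomial_eq_nonsingular
    (J : ℕ) (hJ : 1 ≤ J) (n : ℕ) (α : Fin J → ℝ) (hα : ∀ j, 0 < α j)
    (b : ℝ) (hb : 0 < b) (y : Fin J → ℕ) (hy : (∑ j, y j) ≤ n) :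
    ((n.choose (∑ j, y j) : ℝ)
          * betaFn ((∑ j, α j) + ((∑ j, y j : ℕ) : ℝ)) (b + ((n - ∑ j, y j : ℕ) : ℝ))
          / betaFn (∑ j, α j) b)
        * ((Nat.factorial (∑ j, y j) : ℝ) / poch (∑ j, α j) (∑ j, y j))
        * ∏ j, poch (α j) (y j) / (Nat.factorial (y j) : ℝ)
      = (poch b (n - ∑ j, y j) / (Nat.factorial (n - ∑ j, y j) : ℝ))
          * (∏ j, poch (α j) (y j) / (Nat.factorial (y j) : ℝ))
          * ((Nat.factorial n : ℝ) / poch ((∑ j, α j) + b) n) := by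
  obtain ⟨m, hm⟩ := Nat.exists_eq_add_of_le hy
  have ha : 0 < ∑ j, α j :=
    Finset.sum_pos (fun j _ => hα j) ⟨⟨0, hJ⟩, Finset.mem_univ _⟩
  have h := aux_main (∑ j, α j) b ha hb (∑ j, y j) m
    (∏ j, poch (α j) (y j) / (Nat.factorial (y j) : ℝ))
  have hs : n - ∑ j, y j = m := by omega
  rw [hs, hm]
  exact h
end

section
/- (Covariance of a multinomial splitting distribution.) Let J ≥ 1, let p be a pmf on ℕ with finite first and second factorial moments μ₁ = ∑_n n·p(n) < ∞ and μ₂ = ∑_n n(n−1)·p(n) < ∞, let π ∈ (0,1)^J with ∑_j π_j = 1, and let P be the multinomial splitting distribution P(y) = p(|y|)·(|y|!/∏_j y_j!)·∏_j π_j^{y_j} on ℕ^J. Then for all i, j ∈ {1,…,J}, the covariance Cov(Y_i, Y_j) = ∑_y y_i·y_j·P(y) − (∑_y y_i·P(y))·(∑_y y_j·P(y)) equals μ₁·π_i·[i = j] + (μ₂ − μ₁²)·π_i·π_j, where [i = j] is 1 if i = j and 0 otherwise. -/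
open Finset in
lemma aux_deriv {J : ℕ} (T : Finset (Fin J → ℕ)) (c : (Fin J → ℕ) → ℝ) (x : Fin J → ℝ) (j : Fin J) :
    HasDerivAt (fun s : ℝ => ∑ y ∈ T, c y * ∏ k, (x k * if k = j then s else 1) ^ y k)
      (∑ y ∈ T, c y * (y j : ℝ) * ∏ k, x k ^ y k) 1 := by
  have h : (fun s : ℝ => ∑ y ∈ T, c y * ∏ k, (x k * if k = j then s else 1) ^ y k)
      = fun s : ℝ => ∑ y ∈ T, (c y * ∏ k, x k ^ y k) * s ^ y j := by
    funext s
    refine Finset.sum_congr rfl fun y _ => ?_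
    simp only [mul_pow, Finset.prod_mul_distrib, ite_pow, one_pow, Finset.prod_ite_eq',
      Finset.mem_univ, if_true]
    ring
  rw [h]
  refine HasDerivAt.fun_sum fun y _ => ?_
  have := (hasDerivAt_pow (y j) (1 : ℝ)).const_mul (c y * ∏ k, x k ^ y k)
  refine this.congr_deriv ?_
  simp
  ring

lemma aux_sumderiv {J : ℕ} (x : Fin J → ℝ) (j : Fin J) :
    HasDerivAt (fun s : ℝ => ∑ k, (x k * if k = j then s else 1)) (x j) 1 := by
  have : HasDerivAt (fun s : ℝ => ∑ k, (x k * if k = j then s else 1))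
      (∑ k, (x k * if k = j then 1 else 0)) 1 := by
    refine HasDerivAt.fun_sum fun k _ => ?_
    refine HasDerivAt.const_mul _ ?_
    split_ifs
    · exact hasDerivAt_id _
    · exact hasDerivAt_const _ _
  simpa using this

lemma aux_first {J : ℕ} (n : ℕ) (x : Fin J → ℝ) (i : Fin J) :
    ∑ y ∈ Finset.piAntidiag Finset.univ n,
      (Nat.multinomial Finset.univ y : ℝ) * (y i : ℝ) * ∏ k, x k ^ y k
      = n * (∑ k, x k) ^ (n - 1) * x i := by
  have h1 := aux_deriv (Finset.piAntidiag Finset.univ n)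
    (fun y => (Nat.multinomial Finset.univ y : ℝ)) x i
  simp only [← Finset.sum_pow_eq_sum_piAntidiag] at h1
  have h2 := (aux_sumderiv x i).fun_pow n
  have := h1.unique h2
  simpa using this

lemma aux_second {J : ℕ} (n : ℕ) (x : Fin J → ℝ) (i j : Fin J) :
    ∑ y ∈ Finset.piAntidiag Finset.univ n,
      (Nat.multinomial Finset.univ y : ℝ) * (y i : ℝ) * (y j : ℝ) * ∏ k, x k ^ y k
      = n * (∑ k, x k) ^ (n - 1) * (x i * if i = j then 1 else 0)
        + n * ((n : ℝ) - 1) * (∑ k, x k) ^ (n - 1 - 1) * x i * x j := by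
  have h1 := aux_deriv (Finset.piAntidiag Finset.univ n)
    (fun y => (Nat.multinomial Finset.univ y : ℝ) * (y i : ℝ)) x j
  simp only [aux_first] at h1
  have h3 : HasDerivAt (fun s : ℝ => x i * if i = j then s else 1)
      (x i * if i = j then 1 else 0) 1 := by
    refine HasDerivAt.const_mul _ ?_
    split_ifs
    · exact hasDerivAt_id _
    · exact hasDerivAt_const _ _
  have h2 := (((aux_sumderiv x j).fun_pow (n - 1)).const_mul (n : ℝ)).fun_mul h3
  have := h1.unique h2
  rw [this]
  rcases n with _ | n
  · simp
  · simp
    ring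

lemma aux_sum {J : ℕ} (g : (Fin J → ℕ) → ℝ) (hg : ∀ y, 0 ≤ g y) (a : ℕ → ℝ)
    (ha : ∀ n, ∑ y ∈ Finset.piAntidiag Finset.univ n, g y = a n) (hs : Summable a) :
    ∑' y, g y = ∑' n, a n := by
  let e := Equiv.sigmaFiberEquiv (fun y : Fin J → ℕ => ∑ k, y k)
  have hf : ∀ n, HasSum (fun y : {y : Fin J → ℕ // ∑ k, y k = n} => g y) (a n) := by
    intro n
    have : HasSum (g ∘ (Subtype.val : {y : Fin J → ℕ | ∑ k, y k = n} → _)) (a n) := by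
      rw [hasSum_subtype_iff_indicator, ← ha n]
      have h0 : ∑ y ∈ Finset.piAntidiag Finset.univ n, g y
          = ∑ y ∈ Finset.piAntidiag Finset.univ n,
            Set.indicator {y : Fin J → ℕ | ∑ k, y k = n} g y := by
        refine Finset.sum_congr rfl fun y hy => ?_
        rw [Set.indicator_of_mem]
        simpa using hy
      rw [h0]
      refine hasSum_sum_of_ne_finset_zero fun y hy => ?_
      rw [Set.indicator_of_notMem]
      simpa using hy
    exact this
  have hsum : Summable (fun z => g (e z)) := by
    rw [summable_sigma_of_nonneg (fun _ => hg _)]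
    refine ⟨fun n => (hf n).summable, ?_⟩
    refine hs.congr fun n => ?_
    exact (hf n).tsum_eq.symm
  rw [← e.tsum_eq g, hsum.tsum_sigma' (fun n => (hf n).summable)]
  exact tsum_congr fun n => (hf n).tsum_eq

/-- covariance of a multinomial splitting distribution. With `p` a pmf on `ℕ`
with finite first and second factorial moments `μ₁ = ∑ n·p n` and `μ₂ = ∑ n(n−1)·p n`, and `P`
the multinomial splitting distribution, for all `i, j`,
`Cov(Yᵢ,Yⱼ) = μ₁·πᵢ·[i=j] + (μ₂ − μ₁²)·πᵢ·πⱼ`. -/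
theorem covariance_multinomial_splitting
    (J : ℕ) (hJ : 1 ≤ J)
    (p : ℕ → ℝ) (hp0 : ∀ n, 0 ≤ p n) (hp1 : ∑' n : ℕ, p n = 1)
    (hmean : Summable (fun n : ℕ => (n : ℝ) * p n))
    (hmean2 : Summable (fun n : ℕ => (n : ℝ) * ((n : ℝ) - 1) * p n))
    (π : Fin J → ℝ) (hπ : ∀ j, π j ∈ Set.Ioo (0 : ℝ) 1) (hπs : ∑ j, π j = 1)
    (P : (Fin J → ℕ) → ℝ)
    (hP : ∀ y : Fin J → ℕ,
      P y = p (∑ j, y j)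
        * ((Nat.factorial (∑ j, y j) : ℝ) / ∏ j, (Nat.factorial (y j) : ℝ))
        * ∏ j, π j ^ y j) :
    ∀ i j : Fin J,
      (∑' y : Fin J → ℕ, (y i : ℝ) * (y j : ℝ) * P y)
          - (∑' y : Fin J → ℕ, (y i : ℝ) * P y) * (∑' y : Fin J → ℕ, (y j : ℝ) * P y)
        = (∑' n : ℕ, (n : ℝ) * p n) * π i * (if i = j then 1 else 0)
            + ((∑' n : ℕ, (n : ℝ) * ((n : ℝ) - 1) * p n)
                - (∑' n : ℕ, (n : ℝ) * p n) ^ 2) * π i * π j := by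
  intro i j
  have hPn : ∀ y, 0 ≤ P y := by
    intro y
    rw [hP]
    have := hp0 (∑ j, y j)
    have h2 : 0 ≤ ∏ j, π j ^ y j := Finset.prod_nonneg fun k _ => pow_nonneg (hπ k).1.le _
    positivity
  have hPm : ∀ n, ∀ y ∈ Finset.piAntidiag Finset.univ n,
      P y = p n * ((Nat.multinomial Finset.univ y : ℝ) * ∏ k, π k ^ y k) := by
    intro n y hy
    have hy' : ∑ k, y k = n := by simpa using hy
    rw [hP, hy', ← hy', ← Nat.multinomial_spec Finset.univ y]
    have h0 : (∏ k, ((y k).factorial : ℝ)) ≠ 0 :=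
      Finset.prod_ne_zero_iff.2 fun k _ => by positivity
    push_cast
    field_simp
  have hE : ∀ i : Fin J, ∑' y : Fin J → ℕ, (y i : ℝ) * P y = (∑' n : ℕ, (n : ℝ) * p n) * π i := by
    intro i
    rw [← tsum_mul_right]
    refine aux_sum _ (fun y => mul_nonneg (Nat.cast_nonneg _) (hPn y)) _ (fun n => ?_)
      (hmean.mul_right _)
    have := aux_first n π i
    rw [hπs, one_pow, mul_one] at this
    calc _ = p n * ∑ y ∈ Finset.piAntidiag Finset.univ n,
      (Nat.multinomial Finset.univ y : ℝ) * (y i : ℝ) * ∏ k, π k ^ y k := by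
          rw [Finset.mul_sum]
          refine Finset.sum_congr rfl fun y hy => ?_
          rw [hPm n y hy]; ring
      _ = _ := by rw [this]; ring
  have hE2 : ∑' y : Fin J → ℕ, (y i : ℝ) * (y j : ℝ) * P y
      = (∑' n : ℕ, (n : ℝ) * p n) * (π i * (if i = j then 1 else 0))
        + (∑' n : ℕ, (n : ℝ) * ((n : ℝ) - 1) * p n) * (π i * π j) := by
    rw [← tsum_mul_right, ← tsum_mul_right, ← (hmean.mul_right _).tsum_add (hmean2.mul_right _)]
    refine aux_sum _ (fun y => mul_nonneg (by positivity) (hPn y)) _ (fun n => ?_)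
      ((hmean.mul_right _).add (hmean2.mul_right _))
    have := aux_second n π i j
    rw [hπs, one_pow, one_pow, mul_one, mul_one] at this
    calc _ = p n * ∑ y ∈ Finset.piAntidiag Finset.univ n,
      (Nat.multinomial Finset.univ y : ℝ) * (y i : ℝ) * (y j : ℝ) * ∏ k, π k ^ y k := by
          rw [Finset.mul_sum]
          refine Finset.sum_congr rfl fun y hy => ?_
          rw [hPm n y hy]; ring
      _ = _ := by rw [this]; ring
  rw [hE2, hE, hE]
  ring
end

section
/- (Expectation of a Dirichlet multinomial splitting distribution.) Let J ≥ 1, let p be a pmf on ℕ with finite mean μ₁ = ∑_n n·p(n) < ∞, let α ∈ (0,∞)^J, and let P be the Dirichlet multinomial splitting distribution P(y) = p(|y|)·(|y|!/(|α|)_{|y|})·∏_j (α_j)_{y_j}/y_j! on ℕ^J. Then for every j ∈ {1,…,J}: ∑_{y ∈ ℕ^J} y_j·P(y) = μ₁·α_j/|α|. -/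
open Finset in
lemma aux_shift {J : ℕ} (α : Fin J → ℝ) (j : Fin J) (n : ℕ) :
    ∑ y ∈ piAntidiag (univ : Finset (Fin J)) (n+1), (y j : ℝ) * ∏ i, poch (α i) (y i) / (Nat.factorial (y i) : ℝ)
    = ∑ y ∈ piAntidiag (univ : Finset (Fin J)) n, (α j + y j) * ∏ i, poch (α i) (y i) / (Nat.factorial (y i) : ℝ) := by
  symm
  refine Finset.sum_of_injOn (fun y => y + Pi.single j 1) ?_ ?_ ?_ ?_
  · intro a _ b _ h
    exact add_right_cancel h
  · intro y hy
    simp only [mem_coe, mem_piAntidiag] at hy ⊢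
    simp [Finset.sum_add_distrib, hy.1]
  · intro y hy hn
    have : y j = 0 := by
      by_contra h
      apply hn
      have h2 : y - Pi.single j 1 + Pi.single j 1 = y := by
        ext i
        by_cases hi : i = j
        · subst hi; simp; omega
        · simp [hi]
      refine ⟨y - Pi.single j 1, ?_, h2⟩
      have h3 : ∑ i, (y - Pi.single j 1 : Fin J → ℕ) i + ∑ i, (Pi.single j 1 : Fin J → ℕ) i = ∑ i, y i := by
        rw [← Finset.sum_add_distrib]
        exact congrArg (fun z : Fin J → ℕ => ∑ i, z i) h2
      simp only [mem_coe, mem_piAntidiag] at hy ⊢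
      have h4 : ∑ i, (Pi.single j 1 : Fin J → ℕ) i = 1 := by simp
      refine ⟨?_, fun _ _ => mem_univ _⟩
      have h5 : ∑ i, y i = n + 1 := hy.1
      change ∑ i, (y - Pi.single j 1 : Fin J → ℕ) i = n
      omega
    simp [this]
  · intro y _
    rw [← Finset.mul_prod_erase univ _ (mem_univ j), ← Finset.mul_prod_erase univ _ (mem_univ j)]
    have : ∏ i ∈ univ.erase j, poch (α i) ((y + Pi.single j 1 : Fin J → ℕ) i) / (Nat.factorial ((y + Pi.single j 1 : Fin J → ℕ) i) : ℝ)
      = ∏ i ∈ univ.erase j, poch (α i) (y i) / (Nat.factorial (y i) : ℝ) := by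
      refine Finset.prod_congr rfl fun i hi => ?_
      have := Finset.ne_of_mem_erase hi
      simp [this]
    rw [this]
    simp only [Pi.add_apply, Pi.single_eq_same, poch, Finset.prod_range_succ, Nat.factorial_succ]
    have := Nat.factorial_ne_zero (y j)
    push_cast
    field_simp

open Finset in
lemma aux_S {J : ℕ} (α : Fin J → ℝ) (n : ℕ) :
    ∑ y ∈ piAntidiag (univ : Finset (Fin J)) n, ∏ i, poch (α i) (y i) / (Nat.factorial (y i) : ℝ)
    = poch (∑ i, α i) n / (Nat.factorial n : ℝ) := by
  induction n with
  | zero => simp [poch]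
  | succ n ih =>
    have key : ∀ (m : ℕ) (c : ℝ), ∑ y ∈ piAntidiag (univ : Finset (Fin J)) m,
        (c + m) * ∏ i, poch (α i) (y i) / (Nat.factorial (y i) : ℝ) =
        ∑ y ∈ piAntidiag (univ : Finset (Fin J)) m,
        (c + ∑ j, (y j : ℝ)) * ∏ i, poch (α i) (y i) / (Nat.factorial (y i) : ℝ) := by
      intro m c
      refine Finset.sum_congr rfl fun y hy => ?_
      rw [mem_piAntidiag] at hy
      rw [← hy.1]; push_cast; rfl
    have h := Finset.sum_congr (rfl : (univ : Finset (Fin J)) = univ) fun j _ => aux_shift α j n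
    rw [Finset.sum_comm, Finset.sum_comm (s := univ)] at h
    simp only [← Finset.sum_mul, Finset.sum_add_distrib] at h
    have k1 := key (n+1) 0
    simp only [zero_add] at k1
    rw [← k1, ← key n, ← Finset.mul_sum, ← Finset.mul_sum, ih] at h
    have h1 : ((n+1 : ℕ) : ℝ) ≠ 0 := by positivity
    apply mul_left_cancel₀ h1
    rw [h, poch, poch, Finset.prod_range_succ, Nat.factorial_succ]
    have := Nat.factorial_ne_zero n
    push_cast at h1 ⊢
    field_simp

open Finset in
lemma aux_E {J : ℕ} (α : Fin J → ℝ) (hA : 0 < ∑ i, α i) (j : Fin J) (n : ℕ) :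
    ∑ y ∈ piAntidiag (univ : Finset (Fin J)) n, (y j : ℝ) * ∏ i, poch (α i) (y i) / (Nat.factorial (y i) : ℝ)
    = n * (α j / ∑ i, α i) * (poch (∑ i, α i) n / (Nat.factorial n : ℝ)) := by
  induction n with
  | zero => simp
  | succ n ih =>
    rw [aux_shift]
    simp only [add_mul, Finset.sum_add_distrib]
    rw [ih, ← Finset.mul_sum, aux_S, poch, poch, Finset.prod_range_succ, Nat.factorial_succ]
    have := Nat.factorial_ne_zero n
    have h1 : ((n:ℝ)+1) ≠ 0 := by positivity
    have := hA.ne'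
    push_cast
    field_simp

lemma poch_pos' {x : ℝ} (hx : 0 < x) (k : ℕ) : 0 < poch x k :=
  Finset.prod_pos fun i _ => by positivity

/-- expectation of a Dirichlet multinomial splitting distribution. If `p` is a
pmf on `ℕ` with finite mean `μ₁ = ∑ n·p n`, and `P` is the Dirichlet multinomial splitting
distribution `P y = p |y| * (|y|!/(|α|)_{|y|}) * ∏ⱼ (αⱼ)_{yⱼ}/yⱼ!` on `ℕ^J`, then for every
`j`, `∑_y yⱼ·P y = μ₁·αⱼ/|α|`. -/
theorem expectation_dirichlet_multinomial_splitting
    (J : ℕ) (hJ : 1 ≤ J)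
    (p : ℕ → ℝ) (hp0 : ∀ n, 0 ≤ p n) (hp1 : ∑' n : ℕ, p n = 1)
    (hmean : Summable (fun n : ℕ => (n : ℝ) * p n))
    (α : Fin J → ℝ) (hα : ∀ j, 0 < α j)
    (P : (Fin J → ℕ) → ℝ)
    (hP : ∀ y : Fin J → ℕ,
      P y = p (∑ j, y j)
        * ((Nat.factorial (∑ j, y j) : ℝ) / poch (∑ j, α j) (∑ j, y j))
        * ∏ j, poch (α j) (y j) / (Nat.factorial (y j) : ℝ)) :
    ∀ j : Fin J,
      ∑' y : Fin J → ℕ, (y j : ℝ) * P y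
        = (∑' n : ℕ, (n : ℝ) * p n) * α j / (∑ j, α j) := by
  intro j
  have hA : 0 < ∑ i, α i := Finset.sum_pos (fun i _ => hα i) ⟨j, Finset.mem_univ j⟩
  have hnn : ∀ y, 0 ≤ (y j : ℝ) * P y := by
    intro y
    rw [hP]
    have h1 := poch_pos' hA (∑ j, y j)
    have h2 := hp0 (∑ j, y j)
    have h3 : 0 ≤ ∏ j, poch (α j) (y j) / (Nat.factorial (y j) : ℝ) :=
      Finset.prod_nonneg fun i _ => by
        have := poch_pos' (hα i) (y i)
        positivity
    positivity
  let e := Equiv.sigmaFiberEquiv (fun y : Fin J → ℕ => ∑ i, y i)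
  have hfib : ∀ n : ℕ, HasSum (fun y : {y : Fin J → ℕ // ∑ i, y i = n} => (y.1 j : ℝ) * P y.1)
      ((n : ℝ) * p n * (α j / ∑ i, α i)) := by
    intro n
    have h := Finset.hasSum (Finset.piAntidiag (Finset.univ : Finset (Fin J)) n)
      (fun y => (y j : ℝ) * P y)
    have hs : ∑ y ∈ Finset.piAntidiag (Finset.univ : Finset (Fin J)) n, (y j : ℝ) * P y
        = (n : ℝ) * p n * (α j / ∑ i, α i) := by
      have : ∀ y ∈ Finset.piAntidiag (Finset.univ : Finset (Fin J)) n, (y j : ℝ) * P y =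
          (p n * ((Nat.factorial n : ℝ) / poch (∑ j, α j) n)) *
          ((y j : ℝ) * ∏ i, poch (α i) (y i) / (Nat.factorial (y i) : ℝ)) := by
        intro y hy
        rw [Finset.mem_piAntidiag] at hy
        rw [hP, hy.1]; ring
      rw [Finset.sum_congr rfl this, ← Finset.mul_sum, aux_E α hA]
      have h1 := (poch_pos' hA n).ne'
      have h2 := Nat.factorial_ne_zero n
      have h3 := hA.ne'
      field_simp
    rw [hs] at h
    let e' : {y : Fin J → ℕ // ∑ i, y i = n} ≃
        {y // y ∈ Finset.piAntidiag (Finset.univ : Finset (Fin J)) n} :=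
      Equiv.subtypeEquivRight (fun y => by simp)
    exact e'.hasSum_iff.mpr h
  have hsum : Summable ((fun y : Fin J → ℕ => (y j : ℝ) * P y) ∘ e) := by
    refine (summable_sigma_of_nonneg (f := (fun y : Fin J → ℕ => (y j : ℝ) * P y) ∘ e)
      (fun x => hnn (e x))).mpr ?_
    refine ⟨fun n => (hfib n).summable, ?_⟩
    have : (fun n : ℕ => ∑' y : {y : Fin J → ℕ // ∑ i, y i = n}, (y.1 j : ℝ) * P y.1) =
      fun n : ℕ => (n : ℝ) * p n * (α j / ∑ i, α i) := funext fun n => (hfib n).tsum_eq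
    exact this ▸ hmean.mul_right _
  have h2 := hsum.hasSum.sigma hfib
  rw [← e.tsum_eq, mul_div_assoc, ← tsum_mul_right]
  exact h2.tsum_eq.symm
end

section
/- (Covariance of a Dirichlet multinomial splitting distribution.) Let J ≥ 1, let p be a pmf on ℕ with finite first and second factorial moments μ₁ = ∑_n n·p(n) < ∞ and μ₂ = ∑_n n(n−1)·p(n) < ∞, let α ∈ (0,∞)^J, and let P be the Dirichlet multinomial splitting distribution P(y) = p(|y|)·(|y|!/(|α|)_{|y|})·∏_j (α_j)_{y_j}/y_j! on ℕ^J. Then for all i, j ∈ {1,…,J}, the covariance Cov(Y_i, Y_j) = ∑_y y_i·y_j·P(y) − (∑_y y_i·P(y))·(∑_y y_j·P(y)) equals (1/(|α|·(|α|+1)))·[ ((|α|+1)·μ₁ + μ₂)·α_i·[i = j] + (μ₂ − ((|α|+1)/|α|)·μ₁²)·α_i·α_j ], where [i = j] is 1 if i = j and 0 otherwise. -/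
noncomputable def dmC (a : ℝ) (n : ℕ) : ℝ := poch a n / (Nat.factorial n : ℝ)

lemma dmC_succ (a : ℝ) (n : ℕ) : dmC a (n+1) * ((n:ℝ)+1) = (a + n) * dmC a n := by
  have h1 : (Nat.factorial n : ℝ) ≠ 0 := by positivity
  have h2 : (n:ℝ)+1 ≠ 0 := by positivity
  simp only [dmC, poch, Finset.prod_range_succ, Nat.factorial_succ]
  push_cast
  field_simp

lemma dmC_zero (a : ℝ) : dmC a 0 = 1 := by simp [dmC, poch]

lemma dmC_shift (a : ℝ) (n : ℕ) : (a + n) * dmC a n = a * dmC (a+1) n := by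
  have h : poch a n * (a + n) = a * poch (a+1) n := by
    unfold poch
    rw [← Finset.prod_range_succ (fun i : ℕ => a + (i:ℝ)), Finset.prod_range_succ']
    push_cast
    rw [mul_comm, add_zero]
    congr 1
    exact Finset.prod_congr rfl fun i _ => by ring
  unfold dmC
  rw [← mul_div_assoc, mul_comm, h, mul_div_assoc]

lemma dmC_pos {a : ℝ} (ha : 0 < a) (n : ℕ) : 0 < dmC a n := by
  unfold dmC poch
  have : 0 < ∏ i ∈ Finset.range n, (a + (i:ℝ)) := Finset.prod_pos fun i _ => by positivity
  positivity

noncomputable def dmF (a : ℝ) : PowerSeries ℝ := PowerSeries.mk (dmC a)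

lemma dmF_deriv (a : ℝ) : PowerSeries.derivative ℝ (dmF a)
    = PowerSeries.C a * dmF a + PowerSeries.X * PowerSeries.derivative ℝ (dmF a) := by
  ext n
  rw [map_add, PowerSeries.coeff_C_mul, PowerSeries.coeff_derivative]
  cases n with
  | zero =>
    have := dmC_succ a 0
    simp [dmF] at this ⊢
    linarith
  | succ n =>
    rw [PowerSeries.coeff_succ_X_mul, PowerSeries.coeff_derivative]
    have := dmC_succ a (n+1)
    simp only [dmF, PowerSeries.coeff_mk]
    push_cast at this ⊢
    linarith

lemma dmF_unique (a : ℝ) (G : PowerSeries ℝ) (h0 : PowerSeries.coeff 0 G = 1)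
    (h : PowerSeries.derivative ℝ G
    = PowerSeries.C a * G + PowerSeries.X * PowerSeries.derivative ℝ G) : G = dmF a := by
  ext n
  induction n with
  | zero => rw [h0]; simp [dmF, dmC_zero]
  | succ n ih =>
    have hn : (n:ℝ)+1 ≠ 0 := by positivity
    apply mul_right_cancel₀ hn
    rw [← PowerSeries.coeff_derivative, ← PowerSeries.coeff_derivative]
    rw [h, dmF_deriv, map_add, map_add, PowerSeries.coeff_C_mul, PowerSeries.coeff_C_mul, ih]
    congr 1
    cases n with
    | zero => simp
    | succ n =>
      rw [PowerSeries.coeff_succ_X_mul, PowerSeries.coeff_succ_X_mul,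
        PowerSeries.coeff_derivative, PowerSeries.coeff_derivative, ih]

lemma dmF_add (a b : ℝ) : dmF a * dmF b = dmF (a+b) := by
  apply dmF_unique
  · simp [dmF, PowerSeries.coeff_mul, dmC_zero]
  · rw [Derivation.leibniz, smul_eq_mul, smul_eq_mul, map_add]
    linear_combination dmF a * dmF_deriv b + dmF b * dmF_deriv a

lemma dmF_zero : dmF 0 = 1 := by
  symm
  apply dmF_unique <;> simp

lemma dmF_prod {ι : Type*} (s : Finset ι) (α : ι → ℝ) :
    ∏ j ∈ s, dmF (α j) = dmF (∑ j ∈ s, α j) := by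
  classical
  induction s using Finset.induction_on with
  | empty => simp [dmF_zero]
  | insert a s ha ih => rw [Finset.prod_insert ha, Finset.sum_insert ha, ih, dmF_add]

lemma dm_vandermonde {J : ℕ} (α : Fin J → ℝ) (n : ℕ) :
    ∑ y ∈ Finset.piAntidiag Finset.univ n, ∏ j, dmC (α j) (y j) = dmC (∑ j, α j) n := by
  have h := congrArg (PowerSeries.coeff n) (dmF_prod Finset.univ α)
  rw [PowerSeries.coeff_prod] at h
  simp only [dmF, PowerSeries.coeff_mk] at h
  rw [← h]
  symm
  refine Finset.sum_bij (fun l _ => (l : Fin J → ℕ)) ?_ ?_ ?_ ?_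
  · intro l hl
    simpa using hl
  · intro a _ b _ hab
    exact DFunLike.coe_injective hab
  · intro y hy
    exact ⟨Finsupp.equivFunOnFinite.symm y, by simpa using hy, by simp⟩
  · intros; rfl

noncomputable def dmUp {J : ℕ} (α : Fin J → ℝ) (i : Fin J) : Fin J → ℝ :=
  fun j => α j + if i = j then 1 else 0

lemma dm_step {J : ℕ} (α : Fin J → ℝ) (i : Fin J) (s : Finset (Fin J → ℕ))
    (w : (Fin J → ℕ) → ℝ) :
    ∑ y ∈ s, w y * (α i + y i) * ∏ j, dmC (α j) (y j)
      = α i * ∑ y ∈ s, w y * ∏ j, dmC (dmUp α i j) (y j) := by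
  rw [Finset.mul_sum]
  refine Finset.sum_congr rfl fun y _ => ?_
  rw [← Finset.mul_prod_erase _ _ (Finset.mem_univ i),
    ← Finset.mul_prod_erase _ (fun j => dmC (dmUp α i j) (y j)) (Finset.mem_univ i)]
  have : ∏ j ∈ Finset.univ.erase i, dmC (dmUp α i j) (y j)
      = ∏ j ∈ Finset.univ.erase i, dmC (α j) (y j) := by
    refine Finset.prod_congr rfl fun j hj => ?_
    simp [dmUp, (Finset.ne_of_mem_erase hj).symm]
  rw [this]
  have h := dmC_shift (α i) (y i)
  simp only [dmUp, if_true]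
  linear_combination (w y * ∏ j ∈ Finset.univ.erase i, dmC (α j) (y j)) * h

lemma dm_sum_single {J : ℕ} (α : Fin J → ℝ) (i : Fin J) :
    ∑ j, dmUp α i j = ∑ j, α j + 1 := by
  simp [dmUp, Finset.sum_add_distrib]

lemma dm_E1 {J : ℕ} (α : Fin J → ℝ) (hA : 0 < ∑ j, α j) (i : Fin J) (n : ℕ) :
    ∑ y ∈ Finset.piAntidiag Finset.univ n, (y i : ℝ) * ∏ j, dmC (α j) (y j)
      = n * α i / (∑ j, α j) * dmC (∑ j, α j) n := by
  have h := dm_step α i (Finset.piAntidiag Finset.univ n) (fun _ => 1)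
  simp only [one_mul, dm_vandermonde, dm_sum_single, add_mul, Finset.sum_add_distrib,
    ← Finset.mul_sum] at h
  have h2 := dmC_shift (∑ j, α j) n
  field_simp
  linear_combination (∑ j, α j) * h - α i * h2

lemma dm_E2 {J : ℕ} (α : Fin J → ℝ) (hA : 0 < ∑ j, α j) (i j : Fin J) (n : ℕ) :
    ∑ y ∈ Finset.piAntidiag Finset.univ n, (y i : ℝ) * (y j : ℝ) * ∏ j, dmC (α j) (y j)
      = ((n * ((n:ℝ) - 1)) * (α i * (α j + if i = j then 1 else 0)
            / ((∑ j, α j) * (∑ j, α j + 1)))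
          + n * (α i * (if i = j then 1 else 0) / (∑ j, α j))) * dmC (∑ j, α j) n := by
  have hd : dmUp α i j = α j + if i = j then 1 else 0 := rfl
  have h := dm_step α i (Finset.piAntidiag Finset.univ n)
    (fun y => 1 * (dmUp α i j + y j))
  rw [dm_step (dmUp α i) j _ (fun _ => 1)] at h
  simp only [one_mul, dm_vandermonde, dm_sum_single, hd] at h
  have e1 := dm_E1 α hA i n
  have e2 := dm_E1 α hA j n
  have e0 := dm_vandermonde α n
  have s1 := dmC_shift (∑ j, α j) n
  have s2 := dmC_shift (∑ j, α j + 1) n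
  set A := ∑ j, α j with hAdef
  set δ : ℝ := if i = j then 1 else 0 with hδ
  have hs : δ * α i = δ * α j := by
    rw [hδ]; split_ifs with hij <;> simp [hij]
  have hs2 : δ * ∑ y ∈ Finset.piAntidiag Finset.univ n, (y i : ℝ) * ∏ j, dmC (α j) (y j)
     = δ * ∑ y ∈ Finset.piAntidiag Finset.univ n, (y j : ℝ) * ∏ j, dmC (α j) (y j) := by
    rw [hδ]; split_ifs with hij <;> simp [hij]
  have hx : ∑ y ∈ Finset.piAntidiag Finset.univ n, (α j + δ + (y j:ℝ)) * (α i + y i) * ∏ j, dmC (α j) (y j)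
      = (α j + δ) * α i * ∑ y ∈ Finset.piAntidiag Finset.univ n, ∏ j, dmC (α j) (y j)
       + (α j + δ) * ∑ y ∈ Finset.piAntidiag Finset.univ n, (y i : ℝ) * ∏ j, dmC (α j) (y j)
       + α i * ∑ y ∈ Finset.piAntidiag Finset.univ n, (y j : ℝ) * ∏ j, dmC (α j) (y j)
       + ∑ y ∈ Finset.piAntidiag Finset.univ n, (y i : ℝ) * (y j : ℝ) * ∏ j, dmC (α j) (y j) := by
    simp only [Finset.mul_sum, ← Finset.sum_add_distrib]
    exact Finset.sum_congr rfl fun y _ => by ring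
  rw [hx, e0, e1, e2] at h
  have hA1 : A + 1 ≠ 0 := by positivity
  have t1 : dmC (A+1) n = (A + n) * dmC A n / A := by field_simp; linarith
  have t2 : dmC (A+1+1) n = (A + 1 + n) * dmC (A+1) n / (A+1) := by field_simp; linarith
  rw [t2, t1] at h
  generalize (∑ y ∈ Finset.piAntidiag Finset.univ n, (y i : ℝ) * (y j : ℝ) * ∏ j, dmC (α j) (y j)) = S at *
  rw [← eq_sub_iff_add_eq'] at h
  rw [h]
  field_simp
  ring

lemma dm_tsum {J : ℕ} (f : (Fin J → ℕ) → ℝ) (hf : ∀ y, 0 ≤ f y) (S : ℕ → ℝ)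
    (hS : ∀ n, ∑ y ∈ Finset.piAntidiag Finset.univ n, f y = S n) (hs : Summable S) :
    ∑' y, f y = ∑' n, S n := by
  let e := Equiv.sigmaFiberEquiv (fun y : Fin J → ℕ => ∑ j, y j)
  have hset : ∀ n, {y : Fin J → ℕ | ∑ j, y j = n} = ↑(Finset.piAntidiag Finset.univ n : Finset (Fin J → ℕ)) := by
    intro n; ext y; simp
  have hfib : ∀ n, HasSum (fun y : {y : Fin J → ℕ // ∑ j, y j = n} => f y) (S n) := by
    intro n
    have h := (Finset.piAntidiag Finset.univ n : Finset (Fin J → ℕ)).hasSum f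
    rw [hS] at h
    change HasSum (f ∘ ((↑) : ↑(↑(Finset.piAntidiag Finset.univ n : Finset (Fin J → ℕ)) : Set (Fin J → ℕ)) → _)) _ at h
    rw [← hset n] at h
    exact h
  rw [← e.tsum_eq f]
  have hsum : Summable (fun c => f (e c)) := by
    rw [summable_sigma_of_nonneg (fun _ => hf _)]
    refine ⟨fun n => (hfib n).summable, ?_⟩
    convert hs using 2 with n
    exact (hfib n).tsum_eq
  rw [hsum.tsum_sigma' (fun n => (hfib n).summable)]
  exact tsum_congr fun n => (hfib n).tsum_eq



/-- covariance of a Dirichlet multinomial splitting distribution. With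
`μ₁ = ∑ n·p n` and `μ₂ = ∑ n(n−1)·p n` finite, for all `i, j`,
`Cov(Yᵢ,Yⱼ) = (1/(|α|(|α|+1)))·[((|α|+1)μ₁ + μ₂)·αᵢ·[i=j] + (μ₂ − ((|α|+1)/|α|)μ₁²)·αᵢαⱼ]`. -/
theorem covariance_dirichlet_multinomial_splitting
    (J : ℕ) (hJ : 1 ≤ J)
    (p : ℕ → ℝ) (hp0 : ∀ n, 0 ≤ p n) (hp1 : ∑' n : ℕ, p n = 1)
    (hmean : Summable (fun n : ℕ => (n : ℝ) * p n))
    (hmean2 : Summable (fun n : ℕ => (n : ℝ) * ((n : ℝ) - 1) * p n))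
    (α : Fin J → ℝ) (hα : ∀ j, 0 < α j)
    (P : (Fin J → ℕ) → ℝ)
    (hP : ∀ y : Fin J → ℕ,
      P y = p (∑ j, y j)
        * ((Nat.factorial (∑ j, y j) : ℝ) / poch (∑ j, α j) (∑ j, y j))
        * ∏ j, poch (α j) (y j) / (Nat.factorial (y j) : ℝ)) :
    ∀ i j : Fin J,
      (∑' y : Fin J → ℕ, (y i : ℝ) * (y j : ℝ) * P y)
          - (∑' y : Fin J → ℕ, (y i : ℝ) * P y) * (∑' y : Fin J → ℕ, (y j : ℝ) * P y)
        = (1 / ((∑ j, α j) * ((∑ j, α j) + 1)))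
            * ((((∑ j, α j) + 1) * (∑' n : ℕ, (n : ℝ) * p n)
                  + (∑' n : ℕ, (n : ℝ) * ((n : ℝ) - 1) * p n))
                * α i * (if i = j then 1 else 0)
              + ((∑' n : ℕ, (n : ℝ) * ((n : ℝ) - 1) * p n)
                  - (((∑ j, α j) + 1) / (∑ j, α j)) * (∑' n : ℕ, (n : ℝ) * p n) ^ 2)
                * α i * α j) := by
  have hA : 0 < ∑ j, α j := Finset.sum_pos (fun j _ => hα j) ⟨⟨0, hJ⟩, Finset.mem_univ _⟩
  have hPn : ∀ n, ∀ y ∈ (Finset.piAntidiag Finset.univ n : Finset (Fin J → ℕ)),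
      P y = p n / dmC (∑ j, α j) n * ∏ j, dmC (α j) (y j) := by
    intro n y hy
    have hy' : ∑ j, y j = n := by simpa using hy
    rw [hP, hy']
    simp only [dmC]
    congr 1
    rw [div_div_eq_mul_div, mul_div_assoc]
  have hP0 : ∀ y, 0 ≤ P y := by
    intro y
    rw [hPn (∑ j, y j) y (by simp)]
    have h1 := dmC_pos hA (∑ j, y j)
    have h2 : 0 ≤ ∏ j, dmC (α j) (y j) := Finset.prod_nonneg fun j _ => (dmC_pos (hα j) _).le
    have h3 := hp0 (∑ j, y j)
    positivity
  have key : ∀ (w : (Fin J → ℕ) → ℝ) (T : ℝ) (n : ℕ),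
      ∑ y ∈ Finset.piAntidiag Finset.univ n, w y * ∏ j, dmC (α j) (y j)
        = T * dmC (∑ j, α j) n →
      ∑ y ∈ Finset.piAntidiag Finset.univ n, w y * P y = T * p n := by
    intro w T n h
    have h1 := dmC_pos hA n
    calc _ = ∑ y ∈ Finset.piAntidiag Finset.univ n,
          p n / dmC (∑ j, α j) n * (w y * ∏ j, dmC (α j) (y j)) :=
          Finset.sum_congr rfl fun y hy => by rw [hPn n y hy]; ring
      _ = _ := by rw [← Finset.mul_sum, h]; field_simp
  have m1 : ∀ i, ∑' y : Fin J → ℕ, (y i : ℝ) * P y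
      = (∑' n : ℕ, (n : ℝ) * p n) * (α i / ∑ j, α j) := by
    intro i
    rw [← tsum_mul_right]
    refine dm_tsum _ (fun y => mul_nonneg (Nat.cast_nonneg _) (hP0 y)) _ (fun n => ?_)
      (hmean.mul_right _)
    rw [key _ (n * α i / (∑ j, α j)) n (dm_E1 α hA i n)]
    ring
  intro i j
  have m2 : ∑' y : Fin J → ℕ, (y i : ℝ) * (y j : ℝ) * P y
      = (∑' n : ℕ, (n : ℝ) * ((n : ℝ) - 1) * p n)
          * (α i * (α j + if i = j then 1 else 0) / ((∑ j, α j) * (∑ j, α j + 1)))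
        + (∑' n : ℕ, (n : ℝ) * p n) * (α i * (if i = j then 1 else 0) / (∑ j, α j)) := by
    rw [← tsum_mul_right, ← tsum_mul_right,
      ← (hmean2.mul_right _).tsum_add (hmean.mul_right _)]
    refine dm_tsum _ (fun y => mul_nonneg (by positivity) (hP0 y)) _ (fun n => ?_)
      ((hmean2.mul_right _).add (hmean.mul_right _))
    rw [key _ _ n (dm_E2 α hA i j n)]
    ring
  rw [m2, m1, m1]
  generalize (if i = j then (1:ℝ) else 0) = δ
  have hA1 : (∑ j, α j) + 1 ≠ 0 := by positivity
  field_simp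
  ring
end

section
/- (Product of two independent beta random variables.) Let a, b, c > 0 and let B(u,v) = Γ(u)Γ(v)/Γ(u+v) denote the Beta function. Then for every z ∈ (0,1), the density of the product X·Y of independent X ∼ β(a,b) and Y ∼ β(a+b,c) satisfies ∫_{z}^{1} [x^{a−1}·(1−x)^{b−1}/B(a,b)]·[(z/x)^{a+b−1}·(1−z/x)^{c−1}/B(a+b,c)]·(1/x) dx = z^{a−1}·(1−z)^{b+c−1}/B(a,b+c); that is, X·Y ∼ β(a, b+c). -/
open MeasureTheory Set in
theorem betaFn_eq_integral (b c : ℝ) (hb : 0 < b) (hc : 0 < c) :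
    ∫ t in Ioo (0:ℝ) 1, t ^ (b - 1) * (1 - t) ^ (c - 1) = betaFn b c := by
  have h := ProbabilityTheory.beta_eq_betaIntegralReal b c hb hc
  have h0 : betaFn b c = ProbabilityTheory.beta b c := rfl
  rw [h0, h, Complex.betaIntegral, intervalIntegral.integral_of_le (by norm_num),
      ← integral_Ioc_eq_integral_Ioo, ← RCLike.re_to_complex, ← integral_re]
  · refine setIntegral_congr_fun measurableSet_Ioc fun x ⟨hx1, hx₂⟩ ↦ ?_
    norm_cast
    rw [← Complex.ofReal_cpow, ← Complex.ofReal_cpow, RCLike.re_to_complex,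
      Complex.re_mul_ofReal, Complex.ofReal_re]
    all_goals linarith
  convert! Complex.betaIntegral_convergent (u := b) (v := c) (by simpa) (by simpa)
  rw [intervalIntegrable_iff_integrableOn_Ioc_of_le (by simp), IntegrableOn]

theorem beta_pointwise (a b c z t : ℝ) (hz0 : 0 < z) (hz1 : z < 1) (ht0 : 0 < t) (ht1 : t < 1) :
    z * (1 - z) / (z + t * (1 - z)) ^ 2 *
      (((z / (z + t * (1 - z))) ^ (a - 1) * (1 - z / (z + t * (1 - z))) ^ (b - 1))
       * ((z / (z / (z + t * (1 - z)))) ^ (a + b - 1)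
          * (1 - z / (z / (z + t * (1 - z)))) ^ (c - 1)) * (1 / (z / (z + t * (1 - z)))))
      = z ^ (a - 1) * (1 - z) ^ (b + c - 1) * (t ^ (b - 1) * (1 - t) ^ (c - 1)) := by
  have h1 : 0 < 1 - z := by linarith
  have h2 : 0 < 1 - t := by linarith
  obtain ⟨D, hD⟩ : ∃ D, D = z + t * (1 - z) := ⟨_, rfl⟩
  have hDp : 0 < D := by rw [hD]; positivity
  rw [← hD]
  have e1 : z / (z / D) = D := by field_simp
  have e2 : 1 - z / D = t * (1 - z) / D := by field_simp; rw [hD]; ring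
  have e3 : 1 - D = (1 - z) * (1 - t) := by rw [hD]; ring
  rw [e1, e2, e3, Real.div_rpow hz0.le hDp.le, Real.div_rpow (by positivity) hDp.le,
    Real.mul_rpow ht0.le h1.le, Real.mul_rpow h1.le h2.le,
    show a + b - 1 = (a - 1) + (b - 1) + 1 by ring,
    show b + c - 1 = (b - 1) + (c - 1) + 1 by ring]
  rw [Real.rpow_add hDp, Real.rpow_add hDp, Real.rpow_add h1, Real.rpow_add h1,
    Real.rpow_one, Real.rpow_one]
  have p1 := (Real.rpow_pos_of_pos hDp (a-1)).ne'
  have p2 := (Real.rpow_pos_of_pos hDp (b-1)).ne'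
  generalize D ^ (a-1) = A at *
  generalize D ^ (b-1) = B at *
  generalize z ^ (a-1) = Z at *
  generalize (1-z) ^ (b-1) = Z1 at *
  generalize (1-z) ^ (c-1) = Z2 at *
  generalize t ^ (b-1) = T at *
  generalize (1-t) ^ (c-1) = T1 at *
  field_simp

theorem beta_image (z : ℝ) (hz0 : 0 < z) (hz1 : z < 1) :
    (fun t : ℝ => z / (z + t * (1 - z))) '' Set.Ioo 0 1 = Set.Ioo z 1 := by
  have h1 : 0 < 1 - z := by linarith
  ext x
  constructor
  · rintro ⟨t, ⟨h0, ht⟩, rfl⟩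
    have : 0 < t * (1 - z) := by positivity
    have h3 : t * (1 - z) < 1 - z := by nlinarith
    constructor
    · show z < z / _
      rw [lt_div_iff₀ (by positivity)]; nlinarith
    · show z / _ < 1
      rw [div_lt_one (by positivity)]; linarith
  · rintro ⟨hx0, hx1⟩
    have hx : 0 < x := by linarith
    refine ⟨z * (1 - x) / (x * (1 - z)), ⟨?_, ?_⟩, ?_⟩
    · have : 0 < 1 - x := by linarith
      positivity
    · rw [div_lt_one (by positivity)]; nlinarith
    · have : z + z * (1 - x) / (x * (1 - z)) * (1 - z) = z / x := by
        field_simp; ring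
      show z / _ = x
      rw [this]; field_simp

/-- the product of two independent beta random variables `X ∼ β(a,b)` and
`Y ∼ β(a+b,c)` follows `β(a, b+c)`: for every `z ∈ (0,1)`,
`∫_z^1 [x^{a−1}(1−x)^{b−1}/B(a,b)] [(z/x)^{a+b−1}(1−z/x)^{c−1}/B(a+b,c)] (1/x) dx
  = z^{a−1}(1−z)^{b+c−1}/B(a,b+c)`. -/
theorem beta_product_density
    (a b c : ℝ) (ha : 0 < a) (hb : 0 < b) (hc : 0 < c)
    (z : ℝ) (hz : z ∈ Set.Ioo (0 : ℝ) 1) :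
    ∫ x in z..1,
        (x ^ (a - 1) * (1 - x) ^ (b - 1) / betaFn a b)
          * ((z / x) ^ (a + b - 1) * (1 - z / x) ^ (c - 1) / betaFn (a + b) c)
          * (1 / x)
      = z ^ (a - 1) * (1 - z) ^ (b + c - 1) / betaFn a (b + c) := by
  obtain ⟨hz0, hz1⟩ := hz
  have h1 : 0 < 1 - z := by linarith
  have hI : ∫ x in Set.Ioo z 1, ((x ^ (a - 1) * (1 - x) ^ (b - 1))
          * ((z / x) ^ (a + b - 1) * (1 - z / x) ^ (c - 1)) * (1 / x))
      = z ^ (a - 1) * (1 - z) ^ (b + c - 1) * betaFn b c := by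
    rw [← beta_image z hz0 hz1, MeasureTheory.integral_image_eq_integral_abs_deriv_smul
      (f' := fun t => - (z * (1 - z) / (z + t * (1 - z)) ^ 2)) measurableSet_Ioo,
      ← betaFn_eq_integral b c hb hc, ← MeasureTheory.integral_const_mul]
    · refine MeasureTheory.setIntegral_congr_fun measurableSet_Ioo fun t ht => ?_
      have hD : 0 < z + t * (1 - z) := by have := ht.1; positivity
      show |_| • _ = _
      rw [abs_neg, abs_of_pos (by positivity), smul_eq_mul]
      exact beta_pointwise a b c z t hz0 hz1 ht.1 ht.2
    · intro t ht
      have hD : 0 < z + t * (1 - z) := by have := ht.1; positivity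
      have hd : HasDerivAt (fun t : ℝ => z + t * (1 - z)) (1 - z) t := by
        simpa using ((hasDerivAt_id t).mul_const (1 - z)).const_add z
      have := (hasDerivAt_const t z).fun_div hd hD.ne'
      refine HasDerivAt.hasDerivWithinAt ?_
      refine this.congr_deriv ?_
      rw [zero_mul, zero_sub, neg_div]
    · intro s hs t ht h
      have hD : 0 < z + t * (1 - z) := by have := ht.1; positivity
      have hD' : 0 < z + s * (1 - z) := by have := hs.1; positivity
      have h : z / _ = z / _ := h
      rw [div_eq_div_iff hD'.ne' hD.ne'] at h
      have h := mul_left_cancel₀ hz0.ne' h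
      exact mul_right_cancel₀ h1.ne' (add_left_cancel h).symm
  rw [intervalIntegral.integral_of_le hz1.le, MeasureTheory.integral_Ioc_eq_integral_Ioo]
  have hc2 : ∀ x : ℝ, (x ^ (a - 1) * (1 - x) ^ (b - 1) / betaFn a b)
          * ((z / x) ^ (a + b - 1) * (1 - z / x) ^ (c - 1) / betaFn (a + b) c)
          * (1 / x) = (betaFn a b * betaFn (a + b) c)⁻¹ * ((x ^ (a - 1) * (1 - x) ^ (b - 1))
          * ((z / x) ^ (a + b - 1) * (1 - z / x) ^ (c - 1)) * (1 / x)) := by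
    intro x
    rw [mul_inv]; ring
  simp_rw [hc2]
  rw [MeasureTheory.integral_const_mul, hI]
  have g1 := (Real.Gamma_pos_of_pos ha).ne'
  have g2 := (Real.Gamma_pos_of_pos hb).ne'
  have g3 := (Real.Gamma_pos_of_pos hc).ne'
  have g4 := (Real.Gamma_pos_of_pos (add_pos ha hb)).ne'
  have g5 := (Real.Gamma_pos_of_pos (add_pos hb hc)).ne'
  have g6 := (Real.Gamma_pos_of_pos (add_pos (add_pos ha hb) hc)).ne'
  unfold betaFn
  rw [← add_assoc a b c]
  generalize z ^ (a-1) = Z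
  generalize (1-z) ^ (b+c-1) = Z1
  field_simp
end
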